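/- In the linear setting, assume (C1): lim_{n→∞} (1 − h_n)·ln n = 0, and (C2): sup_{k≥0} (b_k − b_{k+1})/b_{k+1} < ∞. Then limsup_{n→∞} sup{ m_n([s,t])/(t − s)^{h_n} : 0 ≤ s < t ≤ 1 and (s,t) ∩ J_n ≠ ∅ } ≤ 1. -/

import Mathlib

open Set Filter MeasureTheory Topology

noncomputable section

/-- Composition `g_{i₁} ∘ g_{i₂} ∘ ⋯ ∘ g_{i_l}` along a finite word. -/
def wordComp (g : ℕ → ℝ → ℝ) : List ℕ → ℝ → ℝ
  | [] => id
  | k :: w => g k ∘ wordComp g w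

/-- The limit set `J_n` of the IFS `S_n = {g_1, …, g_n}`. -/
def limitSet (g : ℕ → ℝ → ℝ) (n : ℕ) : Set ℝ :=
  ⋂ l : ℕ, ⋃ w ∈ {w : List ℕ | w.length = l + 1 ∧ ∀ i ∈ w, 1 ≤ i ∧ i ≤ n},
    wordComp g w '' Set.Icc (0 : ℝ) 1

/-- The decreasing affine map `g_k(x) = b_{k-1} - (b_{k-1} - b_k)·x`. -/
def gAff (b : ℕ → ℝ) (k : ℕ) (x : ℝ) : ℝ := b (k - 1) - (b (k - 1) - b k) * x

/-- The normalized Hausdorff measure `m_n` on the limit set `J_n`. -/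
def normMeas (g : ℕ → ℝ → ℝ) (h : ℕ → ℝ) (n : ℕ) (A : Set ℝ) : ENNReal :=
  μH[h n] (A ∩ limitSet g n) / μH[h n] (limitSet g n)

/-!
Write `h = h_n`. Since `x ↦ x ^ h` is concave, a density bound for `j` adjacent intervals yields one
for their union at the cost of a factor `j ^ (1 - h)`; under (C1) these factors tend to `1` even for
`j = n`, so blocks of first-level intervals `[b (k + 1), b k]` have density at most `n ^ (1 - h)`.

The maps `g_k` reverse orientation. A bound `K` for all `[0, x]` thus gives the bound
`2 ^ (1 - h) * K` for all `[y, 1]`, which are a rescaled `[0, u]` followed by a block. Conversely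
`[0, x]` is a block followed by a rescaled `[u, 1]`, and by (C2) the latter takes up at most a
fraction `θ < 1` of `[0, x]`, so only the fraction `θ ^ h` of the excess density is inherited. The
best constant for `[0, x]` is therefore at most the fixed point of an affine contraction, and this
fixed point tends to `1`.

Any other interval is rescaled until it no longer lies in one first-level interval. It then consists
of an end piece of each kind with a block between them, which costs a further factor `3 ^ (1 - h)`.
-/

section PowerInequalities

variable {h : ℝ}

lemma sum_rpow_le_card_rpow_mul_rpow_sum {ι : Type*} (s : Finset ι) {f : ι → ℝ}
    (hf : ∀ i ∈ s, 0 ≤ f i) (h0 : 0 ≤ h) (h1 : h ≤ 1) :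
    ∑ i ∈ s, f i ^ h ≤ (s.card : ℝ) ^ (1 - h) * (∑ i ∈ s, f i) ^ h := by
  rcases s.eq_empty_or_nonempty with rfl | hs
  · simpa using mul_nonneg (Real.rpow_nonneg le_rfl (1 - h)) (Real.rpow_nonneg le_rfl h)
  have hcard : (0 : ℝ) < s.card := by exact_mod_cast hs.card_pos
  have hjensen := (Real.concaveOn_rpow h0 h1).le_map_sum (t := s) (w := fun _ => (s.card : ℝ)⁻¹)
    (p := f) (fun _ _ => by positivity) (by simp [hcard.ne']) hf
  simp only [smul_eq_mul, ← Finset.mul_sum] at hjensen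
  rw [inv_mul_le_iff₀ hcard, Real.mul_rpow (by positivity) (Finset.sum_nonneg hf)] at hjensen
  rwa [Real.rpow_sub hcard, Real.rpow_one, div_eq_mul_inv, ← Real.inv_rpow hcard.le, mul_assoc]

lemma rpow_add_rpow_le_two_rpow_mul {x y : ℝ} (hx : 0 ≤ x) (hy : 0 ≤ y) (h0 : 0 ≤ h)
    (h1 : h ≤ 1) : x ^ h + y ^ h ≤ 2 ^ (1 - h) * (x + y) ^ h := by
  simpa [Fin.sum_univ_succ] using
    sum_rpow_le_card_rpow_mul_rpow_sum Finset.univ (f := ![x, y])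
      (by simp [Fin.forall_fin_succ, hx, hy]) h0 h1

lemma rpow_add_rpow_add_rpow_le_three_rpow_mul {x y z : ℝ} (hx : 0 ≤ x) (hy : 0 ≤ y)
    (hz : 0 ≤ z) (h0 : 0 ≤ h) (h1 : h ≤ 1) :
    x ^ h + y ^ h + z ^ h ≤ 3 ^ (1 - h) * (x + y + z) ^ h := by
  simpa [Fin.sum_univ_succ, add_assoc] using
    sum_rpow_le_card_rpow_mul_rpow_sum Finset.univ (f := ![x, y, z])
      (by simp [Fin.forall_fin_succ, hx, hy, hz]) h0 h1

end PowerInequalities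

lemma le_div_of_affine_improvement {ι : Type*} {f : ι → ℝ} (hf : BddAbove (range f))
    {N α r : ℝ} (hr : r < 1) (hN : N ≤ α / (1 - r))
    (himprove : ∀ K, N ≤ K → (∀ i, f i ≤ K) → ∀ i, f i ≤ α + r * K) (i : ι) :
    f i ≤ α / (1 - r) := by
  have : Nonempty ι := ⟨i⟩
  refine (le_ciSup hf i).trans ?_
  by_contra! hlt
  have hfix : ⨆ j, f j ≤ α + r * ⨆ j, f j :=
    ciSup_le (himprove _ (hN.trans hlt.le) (le_ciSup hf))
  refine hlt.not_ge ?_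
  rw [le_div_iff₀ (by linarith)]
  linarith

/-- The increment of `Φ` over `[s, t]` is at most `K` times the `h`-th power of the length. For the
distribution function `Φ` of a measure `m` without atoms this bounds the density
`m([s, t]) / (t - s) ^ h` by `K`. -/
def IncrementLE (Φ : ℝ → ℝ) (h K s t : ℝ) : Prop :=
  Φ t - Φ s ≤ K * (t - s) ^ h

namespace IncrementLE

variable {Φ : ℝ → ℝ} {h K N D θ r s t u : ℝ}

lemma iff_div_le (hst : s < t) : IncrementLE Φ h K s t ↔ (Φ t - Φ s) / (t - s) ^ h ≤ K :=
  (div_le_iff₀ (Real.rpow_pos_of_pos (sub_pos.2 hst) h)).symm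

lemma of_eq (hΦ : Φ s = Φ t) (hst : s ≤ t) (hK : 0 ≤ K) : IncrementLE Φ h K s t := by
  have : 0 ≤ t - s := sub_nonneg.2 hst
  rw [IncrementLE, hΦ, sub_self]
  positivity

lemma mono_const (hΦ : IncrementLE Φ h N s t) (hst : s ≤ t) (hNK : N ≤ K) :
    IncrementLE Φ h K s t := by
  have : 0 ≤ t - s := sub_nonneg.2 hst
  refine le_trans hΦ ?_
  gcongr

lemma extend_left (hΦ : IncrementLE Φ h K s t) (heq : Φ r = Φ s) (hrs : r ≤ s) (hst : s ≤ t)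
    (hK : 0 ≤ K) (h0 : 0 ≤ h) : IncrementLE Φ h K r t := by
  have : 0 ≤ t - s := sub_nonneg.2 hst
  rw [IncrementLE, heq]
  refine le_trans hΦ ?_
  gcongr

lemma trans_of_length_le (hrs : IncrementLE Φ h N r s) (hst : IncrementLE Φ h D s t)
    (hr : r ≤ s) (hs : s ≤ t) (hN : 0 ≤ N) (hND : N ≤ D) (hθ : 0 ≤ θ)
    (hlen : t - s ≤ θ * (t - r)) (h0 : 0 ≤ h) (h1 : h ≤ 1) :
    IncrementLE Φ h (N * 2 ^ (1 - h) + (D - N) * θ ^ h) r t := by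
  have hrs0 : 0 ≤ s - r := sub_nonneg.2 hr
  have hst0 : 0 ≤ t - s := sub_nonneg.2 hs
  have hsplit : (s - r) ^ h + (t - s) ^ h ≤ 2 ^ (1 - h) * (t - r) ^ h := by
    simpa using rpow_add_rpow_le_two_rpow_mul hrs0 hst0 h0 h1
  have hlast : (t - s) ^ h ≤ θ ^ h * (t - r) ^ h := by
    rw [← Real.mul_rpow hθ (by linarith)]
    gcongr
  calc Φ t - Φ r ≤ N * (s - r) ^ h + D * (t - s) ^ h := by
        unfold IncrementLE at hrs hst
        linarith
    _ = N * ((s - r) ^ h + (t - s) ^ h) + (D - N) * (t - s) ^ h := by ring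
    _ ≤ N * (2 ^ (1 - h) * (t - r) ^ h) + (D - N) * (θ ^ h * (t - r) ^ h) := by gcongr
    _ = (N * 2 ^ (1 - h) + (D - N) * θ ^ h) * (t - r) ^ h := by ring

lemma trans (hrs : IncrementLE Φ h K r s) (hst : IncrementLE Φ h K s t)
    (hr : r ≤ s) (hs : s ≤ t) (hK : 0 ≤ K) (h0 : 0 ≤ h) (h1 : h ≤ 1) :
    IncrementLE Φ h (2 ^ (1 - h) * K) r t := by
  simpa [mul_comm] using
    hrs.trans_of_length_le hst hr hs hK le_rfl zero_le_one (by linarith) h0 h1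

lemma trans_trans (hrs : IncrementLE Φ h K r s) (hst : IncrementLE Φ h K s t)
    (htu : IncrementLE Φ h K t u) (hr : r ≤ s) (hs : s ≤ t) (ht : t ≤ u)
    (hK : 0 ≤ K) (h0 : 0 ≤ h) (h1 : h ≤ 1) : IncrementLE Φ h (3 ^ (1 - h) * K) r u := by
  have hsplit := rpow_add_rpow_add_rpow_le_three_rpow_mul (sub_nonneg.2 hr) (sub_nonneg.2 hs)
    (sub_nonneg.2 ht) h0 h1
  rw [show s - r + (t - s) + (u - t) = u - r by ring] at hsplit
  calc Φ u - Φ r ≤ K * ((s - r) ^ h + (t - s) ^ h + (u - t) ^ h) := by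
        unfold IncrementLE at hrs hst htu
        linarith
    _ ≤ K * (3 ^ (1 - h) * (u - r) ^ h) := by gcongr
    _ = 3 ^ (1 - h) * K * (u - r) ^ h := by ring

end IncrementLE

/-- The endpoints `1 = b 0 > b 1 > ⋯ > 0` of the first-level intervals `[b (k + 1), b k]`. -/
structure IsCutSequence (b : ℕ → ℝ) : Prop where
  zero : b 0 = 1
  strictAnti : StrictAnti b
  pos : ∀ k, 0 < b k

/-- The length of the first-level interval `[b (k + 1), b k]`, which is `a_{k+1}` in the notation of
the paper: counting from `0` avoids the truncated subtraction in `gAff`. -/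
def gap (b : ℕ → ℝ) (k : ℕ) : ℝ :=
  b k - b (k + 1)

section Cuts

variable {b : ℕ → ℝ} {n k : ℕ} {x : ℝ}

lemma gAff_succ (b : ℕ → ℝ) (k : ℕ) (x : ℝ) : gAff b (k + 1) x = b k - gap b k * x := rfl

@[simp]
lemma gAff_succ_zero (b : ℕ → ℝ) (k : ℕ) : gAff b (k + 1) 0 = b k := by
  simp [gAff_succ]

@[simp]
lemma gAff_succ_one (b : ℕ → ℝ) (k : ℕ) : gAff b (k + 1) 1 = b (k + 1) := by
  simp [gAff_succ, gap]

lemma gap_pos (hb : StrictAnti b) (k : ℕ) : 0 < gap b k :=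
  sub_pos.2 (hb k.lt_succ_self)

lemma gAff_succ_strictAnti (hb : StrictAnti b) (k : ℕ) : StrictAnti (gAff b (k + 1)) :=
  fun _ _ hxy => sub_lt_sub_left (mul_lt_mul_of_pos_left hxy (gap_pos hb k)) _

lemma gAff_succ_mem_Icc (hb : StrictAnti b) (k : ℕ) (hx : x ∈ Icc (0 : ℝ) 1) :
    gAff b (k + 1) x ∈ Icc (b (k + 1)) (b k) := by
  simpa using And.intro ((gAff_succ_strictAnti hb k).antitone hx.2)
    ((gAff_succ_strictAnti hb k).antitone hx.1)

lemma exists_gAff_succ_eq (hb : StrictAnti b) (hx : x ∈ Icc (b (k + 1)) (b k)) :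
    ∃ u ∈ Icc (0 : ℝ) 1, gAff b (k + 1) u = x := by
  have hgap := gap_pos hb k
  refine ⟨(b k - x) / gap b k, ⟨div_nonneg (sub_nonneg.2 hx.2) hgap.le, ?_⟩, ?_⟩
  · rw [div_le_one hgap]
    exact sub_le_sub_left hx.1 _
  · rw [gAff_succ, mul_div_cancel₀ _ hgap.ne', sub_sub_cancel]

lemma exists_mem_Icc_succ (hx : x ∈ Icc (b n) (b 0)) (hn : 0 < n) :
    ∃ k < n, x ∈ Icc (b (k + 1)) (b k) := by
  induction n, hn using Nat.le_induction with
  | base => exact ⟨0, zero_lt_one, hx⟩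
  | succ n _ ih =>
    rcases le_total (b n) x with hnx | hxn
    · obtain ⟨k, hk, hxk⟩ := ih ⟨hnx, hx.2⟩
      exact ⟨k, hk.trans n.lt_succ_self, hxk⟩
    · exact ⟨n, n.lt_succ_self, hx.1, hxn⟩

lemma sum_gap_Ico (b : ℕ → ℝ) {p q : ℕ} (hpq : p ≤ q) :
    ∑ i ∈ Finset.Ico p q, gap b i = b p - b q := by
  have := Finset.sum_Ico_sub b hpq
  simp only [gap]
  rw [← neg_sub (b q), ← this, ← Finset.sum_neg_distrib]
  simp

namespace IsCutSequence

lemma le_one (hb : IsCutSequence b) (k : ℕ) : b k ≤ 1 :=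
  hb.zero ▸ hb.strictAnti.antitone k.zero_le

lemma gap_le_one (hb : IsCutSequence b) (k : ℕ) : gap b k ≤ 1 := by
  unfold gap
  linarith [hb.le_one k, hb.pos (k + 1)]

lemma pos_of_gap_le_mul (hb : IsCutSequence b) {θ : ℝ} (hgap : gap b k ≤ θ * b k) : 0 < θ :=
  pos_of_mul_pos_left ((gap_pos hb.strictAnti k).trans_le hgap) (hb.pos k).le

lemma exists_gAff_succ_eq_of_mem_Icc (hb : IsCutSequence b) (hn : 0 < n)
    (hx : x ∈ Icc (b n) 1) : ∃ k < n, ∃ u ∈ Icc (0 : ℝ) 1, gAff b (k + 1) u = x := by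
  rw [← hb.zero] at hx
  obtain ⟨k, hk, hxk⟩ := exists_mem_Icc_succ hx hn
  exact ⟨k, hk, exists_gAff_succ_eq hb.strictAnti hxk⟩

end IsCutSequence

end Cuts

/-- `Φ` behaves like the distribution function of the self-similar probability measure with weights
`(gap b k) ^ h`, `k < n`: since `gAff b (k + 1)` reverses orientation, the mass `Φ u` of `[0, u]` is
scaled to the mass of `[gAff b (k + 1) u, b k]`. -/
structure IsSelfSimilarCDF (b : ℕ → ℝ) (n : ℕ) (h : ℝ) (Φ : ℝ → ℝ) : Prop where
  monotone : Monotone Φ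
  eq_zero_of_le : ∀ x ≤ b n, Φ x = 0
  apply_one : Φ 1 = 1
  apply_gAff : ∀ k < n, ∀ u ∈ Icc (0 : ℝ) 1,
    Φ (gAff b (k + 1) u) = Φ (b k) - gap b k ^ h * Φ u

/-- The constant bounding the density of `[0, x]`: with `N = n ^ (1 - h)` and `E = 2 ^ (1 - h)`, it
is the fixed point of `K ↦ N * E + (E * K - N) * θ ^ h`. -/
def endConstant (n : ℕ) (h θ : ℝ) : ℝ :=
  (n : ℝ) ^ (1 - h) * (2 ^ (1 - h) - θ ^ h) / (1 - 2 ^ (1 - h) * θ ^ h)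

/-- The constant bounding the density of an arbitrary interval, which is cut into a right end, a
union of first-level intervals and a left end. -/
def intervalConstant (n : ℕ) (h θ : ℝ) : ℝ :=
  3 ^ (1 - h) * (2 ^ (1 - h) * endConstant n h θ)

lemma natCast_rpow_le_endConstant (n : ℕ) {h θ : ℝ} (hθ : 0 ≤ θ) (h1 : h ≤ 1)
    (hcontr : 2 ^ (1 - h) * θ ^ h < 1) : (n : ℝ) ^ (1 - h) ≤ endConstant n h θ := by
  have hE : (1 : ℝ) ≤ 2 ^ (1 - h) := Real.one_le_rpow one_le_two (sub_nonneg.2 h1)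
  have hθh : 0 ≤ θ ^ h := Real.rpow_nonneg hθ h
  rw [endConstant, le_div_iff₀ (by linarith)]
  gcongr
  nlinarith

lemma natCast_rpow_nonneg (n : ℕ) (p : ℝ) : 0 ≤ (n : ℝ) ^ p :=
  Real.rpow_nonneg n.cast_nonneg p

namespace IsSelfSimilarCDF

variable {b : ℕ → ℝ} {n k p q : ℕ} {h K D θ s t u v x y : ℝ} {Φ : ℝ → ℝ}

lemma n_pos (hΦ : IsSelfSimilarCDF b n h Φ) (hb : IsCutSequence b) : 0 < n := by
  by_contra! hn
  obtain rfl := Nat.le_zero.1 hn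
  exact zero_ne_one ((hΦ.eq_zero_of_le 1 hb.zero.ge).symm.trans hΦ.apply_one)

lemma apply_cut_sub_apply_cut_succ (hΦ : IsSelfSimilarCDF b n h Φ) (hk : k < n) :
    Φ (b k) - Φ (b (k + 1)) = gap b k ^ h := by
  have := hΦ.apply_gAff k hk 1 ⟨zero_le_one, le_rfl⟩
  rw [gAff_succ_one, hΦ.apply_one] at this
  linarith

lemma apply_cut_sub_apply_cut (hΦ : IsSelfSimilarCDF b n h Φ) (hpq : p ≤ q) (hqn : q ≤ n) :
    Φ (b p) - Φ (b q) = ∑ i ∈ Finset.Ico p q, gap b i ^ h := by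
  refine (sum_gap_Ico (Φ ∘ b) hpq).symm.trans ?_
  refine Finset.sum_congr rfl fun i hi => hΦ.apply_cut_sub_apply_cut_succ ?_
  exact (Finset.mem_Ico.1 hi).2.trans_le hqn

lemma incrementLE_cut (hΦ : IsSelfSimilarCDF b n h Φ) (hb : IsCutSequence b) (hpq : p ≤ q)
    (hqn : q ≤ n) (h0 : 0 ≤ h) (h1 : h ≤ 1) :
    IncrementLE Φ h ((n : ℝ) ^ (1 - h)) (b q) (b p) := by
  have hlen : 0 ≤ b p - b q := sub_nonneg.2 (hb.strictAnti.antitone hpq)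
  have hcard : ((Finset.Ico p q).card : ℝ) ≤ n := by
    rw [Nat.card_Ico]
    exact_mod_cast (Nat.sub_le q p).trans hqn
  calc Φ (b p) - Φ (b q) = ∑ i ∈ Finset.Ico p q, gap b i ^ h :=
        hΦ.apply_cut_sub_apply_cut hpq hqn
    _ ≤ ((Finset.Ico p q).card : ℝ) ^ (1 - h) * (b p - b q) ^ h := by
        rw [← sum_gap_Ico b hpq]
        exact sum_rpow_le_card_rpow_mul_rpow_sum _ (fun i _ => (gap_pos hb.strictAnti i).le) h0 h1
    _ ≤ (n : ℝ) ^ (1 - h) * (b p - b q) ^ h := by gcongr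

lemma incrementLE_gAff (hΦ : IsSelfSimilarCDF b n h Φ) (hb : IsCutSequence b) (hk : k < n)
    (hu : u ∈ Icc (0 : ℝ) 1) (hv : v ∈ Icc (0 : ℝ) 1) (huv : u ≤ v)
    (hincr : IncrementLE Φ h K u v) :
    IncrementLE Φ h K (gAff b (k + 1) v) (gAff b (k + 1) u) := by
  have hgap := (gap_pos hb.strictAnti k).le
  calc Φ (gAff b (k + 1) u) - Φ (gAff b (k + 1) v)
      = gap b k ^ h * (Φ v - Φ u) := by
        rw [hΦ.apply_gAff k hk u hu, hΦ.apply_gAff k hk v hv]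
        ring
    _ ≤ gap b k ^ h * (K * (v - u) ^ h) :=
        mul_le_mul_of_nonneg_left hincr (Real.rpow_nonneg hgap h)
    _ = K * (gAff b (k + 1) u - gAff b (k + 1) v) ^ h := by
        rw [show gAff b (k + 1) u - gAff b (k + 1) v = gap b k * (v - u) by
          rw [gAff_succ, gAff_succ]; ring, Real.mul_rpow hgap (sub_nonneg.2 huv)]
        ring

lemma incrementLE_gAff_cut (hΦ : IsSelfSimilarCDF b n h Φ) (hb : IsCutSequence b) (hk : k < n)
    (hleft : ∀ x ∈ Icc (0 : ℝ) 1, IncrementLE Φ h K 0 x) (hu : u ∈ Icc (0 : ℝ) 1) :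
    IncrementLE Φ h K (gAff b (k + 1) u) (b k) := by
  simpa using hΦ.incrementLE_gAff hb hk ⟨le_rfl, zero_le_one⟩ hu hu.1 (hleft u hu)

lemma incrementLE_cut_gAff (hΦ : IsSelfSimilarCDF b n h Φ) (hb : IsCutSequence b) (hk : k < n)
    (hright : ∀ y ∈ Icc (0 : ℝ) 1, IncrementLE Φ h K y 1) (hu : u ∈ Icc (0 : ℝ) 1) :
    IncrementLE Φ h K (b (k + 1)) (gAff b (k + 1) u) := by
  simpa using hΦ.incrementLE_gAff hb hk hu ⟨zero_le_one, le_rfl⟩ hu.2 (hright u hu)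

lemma incrementLE_one_of_incrementLE_zero (hΦ : IsSelfSimilarCDF b n h Φ) (hb : IsCutSequence b)
    (h0 : 0 ≤ h) (h1 : h ≤ 1) (hK : (n : ℝ) ^ (1 - h) ≤ K)
    (hleft : ∀ x ∈ Icc (0 : ℝ) 1, IncrementLE Φ h K 0 x) (hy : y ≤ 1) :
    IncrementLE Φ h (2 ^ (1 - h) * K) y 1 := by
  have hK0 : 0 ≤ K := (natCast_rpow_nonneg n _).trans hK
  have habove : ∀ z ∈ Icc (b n) 1, IncrementLE Φ h (2 ^ (1 - h) * K) z 1 := by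
    intro z hz
    obtain ⟨k, hk, u, hu, rfl⟩ := hb.exists_gAff_succ_eq_of_mem_Icc (hΦ.n_pos hb) hz
    have hcell := hΦ.incrementLE_gAff_cut hb hk hleft hu
    have hblock := hΦ.incrementLE_cut hb k.zero_le hk.le h0 h1
    rw [hb.zero] at hblock
    exact hcell.trans (hblock.mono_const (hb.le_one k) hK)
      (gAff_succ_mem_Icc hb.strictAnti k hu).2 (hb.le_one k) hK0 h0 h1
  rcases le_total (b n) y with hny | hyn
  · exact habove y ⟨hny, hy⟩
  · refine (habove (b n) ⟨le_rfl, hb.le_one n⟩).extend_left ?_ hyn (hb.le_one n) (by positivity) h0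
    rw [hΦ.eq_zero_of_le y hyn, hΦ.eq_zero_of_le _ le_rfl]

/-- The part of `[0, x]` inside the first-level interval containing `x` is at most the fraction `θ`
of `[0, x]`, so only that fraction of the excess of `D` over `n ^ (1 - h)` is inherited. -/
lemma incrementLE_zero_of_incrementLE_one (hΦ : IsSelfSimilarCDF b n h Φ) (hb : IsCutSequence b)
    (h0 : 0 ≤ h) (h1 : h ≤ 1) (hθ1 : θ ≤ 1) (hgap : ∀ k, gap b k ≤ θ * b k)
    (hD : (n : ℝ) ^ (1 - h) ≤ D) (hright : ∀ y ∈ Icc (0 : ℝ) 1, IncrementLE Φ h D y 1)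
    (hx : x ∈ Icc (0 : ℝ) 1) :
    IncrementLE Φ h ((n : ℝ) ^ (1 - h) * 2 ^ (1 - h) + (D - (n : ℝ) ^ (1 - h)) * θ ^ h) 0 x := by
  have hN0 := natCast_rpow_nonneg n (1 - h)
  have hθ := (hb.pos_of_gap_le_mul (hgap 0)).le
  have hzero : Φ 0 = Φ (b n) := by
    rw [hΦ.eq_zero_of_le 0 (hb.pos n).le, hΦ.eq_zero_of_le _ le_rfl]
  rcases le_total x (b n) with hxn | hnx
  · exact .of_eq (by rw [hΦ.eq_zero_of_le x hxn, hzero, hΦ.eq_zero_of_le _ le_rfl]) hx.1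
      (add_nonneg (by positivity) (mul_nonneg (sub_nonneg.2 hD) (by positivity)))
  obtain ⟨k, hk, u, hu, rfl⟩ := hb.exists_gAff_succ_eq_of_mem_Icc (hΦ.n_pos hb) ⟨hnx, hx.2⟩
  have hblock : IncrementLE Φ h ((n : ℝ) ^ (1 - h)) 0 (b (k + 1)) :=
    (hΦ.incrementLE_cut hb hk le_rfl h0 h1).extend_left hzero (hb.pos n).le
      (hb.strictAnti.antitone hk) hN0 h0
  refine hblock.trans_of_length_le (hΦ.incrementLE_cut_gAff hb hk hright hu) (hb.pos _).le
    (gAff_succ_mem_Icc hb.strictAnti k hu).1 hN0 hD hθ ?_ h0 h1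
  have hshrink : θ * (gap b k * u) ≤ gap b k * u :=
    mul_le_of_le_one_left (mul_nonneg (gap_pos hb.strictAnti k).le hu.1) hθ1
  have hsucc : b k - b (k + 1) = gap b k := rfl
  rw [gAff_succ]
  linarith [hgap k]

lemma bddAbove_density_zero (hΦ : IsSelfSimilarCDF b n h Φ) (hb : IsCutSequence b) (h0 : 0 ≤ h) :
    BddAbove (range fun x : Ioc (0 : ℝ) 1 => (Φ x - Φ 0) / ((x : ℝ) - 0) ^ h) := by
  have hbn := hb.pos n
  refine ⟨1 / b n ^ h, ?_⟩
  rintro _ ⟨⟨x, hx0, hx1⟩, rfl⟩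
  simp only [hΦ.eq_zero_of_le 0 hbn.le, sub_zero]
  rcases le_total x (b n) with hxn | hnx
  · rw [hΦ.eq_zero_of_le x hxn, zero_div]
    positivity
  · gcongr
    exact hΦ.apply_one ▸ hΦ.monotone hx1

lemma incrementLE_zero (hΦ : IsSelfSimilarCDF b n h Φ) (hb : IsCutSequence b)
    (h0 : 0 ≤ h) (h1 : h ≤ 1) (hθ1 : θ ≤ 1) (hgap : ∀ k, gap b k ≤ θ * b k)
    (hcontr : 2 ^ (1 - h) * θ ^ h < 1) (hx : x ∈ Icc (0 : ℝ) 1) :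
    IncrementLE Φ h (endConstant n h θ) 0 x := by
  have hθ := (hb.pos_of_gap_le_mul (hgap 0)).le
  have hN := natCast_rpow_le_endConstant n hθ h1 hcontr
  have hE : (1 : ℝ) ≤ 2 ^ (1 - h) := Real.one_le_rpow one_le_two (sub_nonneg.2 h1)
  rcases hx.1.eq_or_lt with rfl | hx0
  · exact .of_eq rfl le_rfl ((natCast_rpow_nonneg n _).trans hN)
  rw [IncrementLE.iff_div_le hx0]
  refine le_div_of_affine_improvement (hΦ.bddAbove_density_zero hb h0) hcontr hN ?_ ⟨x, hx0, hx.2⟩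
  rintro K hK hbound ⟨z, hz0, hz1⟩
  have hK0 : 0 ≤ K := (natCast_rpow_nonneg n _).trans hK
  have hleft : ∀ w ∈ Icc (0 : ℝ) 1, IncrementLE Φ h K 0 w := by
    rintro w ⟨hw0, hw1⟩
    rcases hw0.eq_or_lt with rfl | hw0
    · exact .of_eq rfl le_rfl hK0
    · exact (IncrementLE.iff_div_le hw0).2 (hbound ⟨w, hw0, hw1⟩)
  have himproved := hΦ.incrementLE_zero_of_incrementLE_one hb h0 h1 hθ1 hgap
    (hK.trans (le_mul_of_one_le_left hK0 hE))
    (fun y hy => hΦ.incrementLE_one_of_incrementLE_zero hb h0 h1 hK hleft hy.2) ⟨hz0.le, hz1⟩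
  refine ((IncrementLE.iff_div_le hz0).1 himproved).trans_eq ?_
  ring

lemma incrementLE_gAff_of_incrementLE_cut (hΦ : IsSelfSimilarCDF b n h Φ) (hb : IsCutSequence b)
    (h0 : 0 ≤ h) (h1 : h ≤ 1) (hK : (n : ℝ) ^ (1 - h) ≤ K)
    (hright : ∀ y ∈ Icc (0 : ℝ) 1, IncrementLE Φ h K y 1)
    (hs : IncrementLE Φ h K s (b p)) (hsp : s ≤ b p) (hqp : q < p) (hpn : p ≤ n)
    (hu : u ∈ Icc (0 : ℝ) 1) :
    IncrementLE Φ h (3 ^ (1 - h) * K) s (gAff b (q + 1) u) := by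
  have hcuts : b p ≤ b (q + 1) := hb.strictAnti.antitone hqp
  exact hs.trans_trans ((hΦ.incrementLE_cut hb hqp hpn h0 h1).mono_const hcuts hK)
    (hΦ.incrementLE_cut_gAff hb (hqp.trans_le hpn) hright hu) hsp hcuts
    (gAff_succ_mem_Icc hb.strictAnti q hu).1 ((natCast_rpow_nonneg n _).trans hK) h0 h1

lemma incrementLE_or_exists_gAff_eq (hΦ : IsSelfSimilarCDF b n h Φ) (hb : IsCutSequence b)
    (h0 : 0 ≤ h) (h1 : h ≤ 1) (hK : (n : ℝ) ^ (1 - h) ≤ K)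
    (hleft : ∀ x ∈ Icc (0 : ℝ) 1, IncrementLE Φ h K 0 x)
    (hright : ∀ y ∈ Icc (0 : ℝ) 1, IncrementLE Φ h K y 1) (hst : s < t) (ht : t ≤ 1) :
    IncrementLE Φ h (3 ^ (1 - h) * K) s t ∨
      ∃ k < n, ∃ u ∈ Icc (0 : ℝ) 1, ∃ v ∈ Icc (0 : ℝ) 1,
        gAff b (k + 1) v = s ∧ gAff b (k + 1) u = t := by
  have hK0 : 0 ≤ K := (natCast_rpow_nonneg n _).trans hK
  rcases le_total t (b n) with htn | hnt
  · exact .inl (.of_eq (by rw [hΦ.eq_zero_of_le t htn, hΦ.eq_zero_of_le s (hst.le.trans htn)])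
      hst.le (by positivity))
  obtain ⟨q, hq, u, hu, rfl⟩ := hb.exists_gAff_succ_eq_of_mem_Icc (hΦ.n_pos hb) ⟨hnt, ht⟩
  rcases le_total s (b n) with hsn | hns
  · have hs : IncrementLE Φ h K s (b n) :=
      .of_eq (by rw [hΦ.eq_zero_of_le s hsn, hΦ.eq_zero_of_le _ le_rfl]) hsn hK0
    exact .inl (hΦ.incrementLE_gAff_of_incrementLE_cut hb h0 h1 hK hright hs hsn hq le_rfl hu)
  obtain ⟨p, hp, v, hv, rfl⟩ := hb.exists_gAff_succ_eq_of_mem_Icc (hΦ.n_pos hb)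
    ⟨hns, hst.le.trans ht⟩
  have hvp := gAff_succ_mem_Icc hb.strictAnti p hv
  have hqp : q ≤ p := Nat.lt_succ_iff.1 <| hb.strictAnti.lt_iff_gt.1 <|
    (hvp.1.trans_lt hst).trans_le (gAff_succ_mem_Icc hb.strictAnti q hu).2
  rcases hqp.eq_or_lt with rfl | hqp
  · exact .inr ⟨q, hq, u, hu, v, hv, rfl, rfl⟩
  · exact .inl (hΦ.incrementLE_gAff_of_incrementLE_cut hb h0 h1 hK hright
      (hΦ.incrementLE_gAff_cut hb hp hleft hv) hvp.2 hqp hp.le hu)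

/-- Rescaling the first-level interval that contains `[s, t]` stretches it by at least `θ⁻¹`, so
after finitely many steps it no longer lies in a single first-level interval. -/
lemma incrementLE_of_ends (hΦ : IsSelfSimilarCDF b n h Φ) (hb : IsCutSequence b)
    (h0 : 0 ≤ h) (h1 : h ≤ 1) (hθ1 : θ < 1) (hgap : ∀ k, gap b k ≤ θ * b k)
    (hK : (n : ℝ) ^ (1 - h) ≤ K) (hleft : ∀ x ∈ Icc (0 : ℝ) 1, IncrementLE Φ h K 0 x)
    (hright : ∀ y ∈ Icc (0 : ℝ) 1, IncrementLE Φ h K y 1) (hs : 0 ≤ s) (hst : s < t)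
    (ht : t ≤ 1) : IncrementLE Φ h (3 ^ (1 - h) * K) s t := by
  have hθ := hb.pos_of_gap_le_mul (hgap 0)
  obtain ⟨l, hl⟩ := exists_pow_lt_of_lt_one (sub_pos.2 hst) hθ1
  induction l generalizing s t with
  | zero => rw [pow_zero] at hl; linarith
  | succ l ih =>
    rcases hΦ.incrementLE_or_exists_gAff_eq hb h0 h1 hK hleft hright hst ht with
      hincr | ⟨k, hk, u, hu, v, hv, rfl, rfl⟩
    · exact hincr
    have huv : u < v := (gAff_succ_strictAnti hb.strictAnti k).lt_iff_gt.1 hst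
    refine hΦ.incrementLE_gAff hb hk hu hv huv.le (ih hu.1 huv hv.2 ?_)
    refine lt_of_mul_lt_mul_left ?_ hθ.le
    calc θ * θ ^ l < gAff b (k + 1) u - gAff b (k + 1) v := by rwa [← pow_succ']
      _ = gap b k * (v - u) := by rw [gAff_succ, gAff_succ]; ring
      _ ≤ θ * (v - u) := by
        refine mul_le_mul_of_nonneg_right ?_ (sub_nonneg.2 huv.le)
        exact (hgap k).trans (mul_le_of_le_one_right hθ.le (hb.le_one k))

theorem incrementLE_intervalConstant (hΦ : IsSelfSimilarCDF b n h Φ) (hb : IsCutSequence b)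
    (h0 : 0 ≤ h) (h1 : h ≤ 1) (hθ1 : θ < 1) (hgap : ∀ k, gap b k ≤ θ * b k)
    (hcontr : 2 ^ (1 - h) * θ ^ h < 1) (hs : 0 ≤ s) (hst : s < t) (ht : t ≤ 1) :
    IncrementLE Φ h (intervalConstant n h θ) s t := by
  have hN := natCast_rpow_le_endConstant n (hb.pos_of_gap_le_mul (hgap 0)).le h1 hcontr
  have hleft : ∀ x ∈ Icc (0 : ℝ) 1, IncrementLE Φ h (endConstant n h θ) 0 x :=
    fun x hx => hΦ.incrementLE_zero hb h0 h1 hθ1.le hgap hcontr hx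
  have hright : ∀ y ∈ Icc (0 : ℝ) 1, IncrementLE Φ h (2 ^ (1 - h) * endConstant n h θ) y 1 :=
    fun y hy => hΦ.incrementLE_one_of_incrementLE_zero hb h0 h1 hN hleft hy.2
  have hC : endConstant n h θ ≤ 2 ^ (1 - h) * endConstant n h θ :=
    le_mul_of_one_le_left ((natCast_rpow_nonneg n _).trans hN)
      (Real.one_le_rpow one_le_two (sub_nonneg.2 h1))
  exact hΦ.incrementLE_of_ends hb h0 h1 hθ1 hgap (hN.trans hC)
    (fun x hx => (hleft x hx).mono_const hx.1 hC) hright hs hst ht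

end IsSelfSimilarCDF

section LimitSet

variable {g : ℕ → ℝ → ℝ} {n k : ℕ} {x : ℝ}

lemma mem_limitSet : x ∈ limitSet g n ↔ ∀ l : ℕ, ∃ w : List ℕ,
    (w.length = l + 1 ∧ ∀ i ∈ w, 1 ≤ i ∧ i ≤ n) ∧ x ∈ wordComp g w '' Icc 0 1 := by
  simp only [limitSet, mem_iInter, mem_iUnion, mem_ofPred_eq, exists_prop]

lemma mapsTo_wordComp (hg : ∀ i, 1 ≤ i → i ≤ n → MapsTo (g i) (Icc 0 1) (Icc 0 1)) :
    ∀ w : List ℕ, (∀ i ∈ w, 1 ≤ i ∧ i ≤ n) → MapsTo (wordComp g w) (Icc 0 1) (Icc 0 1)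
  | [], _ => mapsTo_id _
  | i :: w, hw =>
    have hi := hw i List.mem_cons_self
    (hg i hi.1 hi.2).comp (mapsTo_wordComp hg w fun j hj => hw j (List.mem_cons_of_mem i hj))

lemma exists_mem_image_of_mem_limitSet
    (hg : ∀ i, 1 ≤ i → i ≤ n → MapsTo (g i) (Icc 0 1) (Icc 0 1)) (hx : x ∈ limitSet g n) :
    ∃ i, 1 ≤ i ∧ i ≤ n ∧ x ∈ g i '' Icc 0 1 := by
  obtain ⟨_ | ⟨i, w⟩, ⟨hlen, hw⟩, z, hz, rfl⟩ := mem_limitSet.1 hx 0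
  · simp at hlen
  · have hi := hw i List.mem_cons_self
    have hwz := mapsTo_wordComp hg w (fun j hj => hw j (List.mem_cons_of_mem i hj)) hz
    exact ⟨i, hi.1, hi.2, _, hwz, rfl⟩

lemma mapsTo_limitSet (hg : ∀ i, 1 ≤ i → i ≤ n → MapsTo (g i) (Icc 0 1) (Icc 0 1))
    (hk1 : 1 ≤ k) (hkn : k ≤ n) : MapsTo (g k) (limitSet g n) (limitSet g n) := by
  intro x hx
  refine mem_limitSet.2 fun l => ?_
  cases l with
  | zero =>
    obtain ⟨i, hi1, hin, z, hz, rfl⟩ := exists_mem_image_of_mem_limitSet hg hx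
    exact ⟨[k], ⟨rfl, by simp [hk1, hkn]⟩, g i z, hg i hi1 hin hz, rfl⟩
  | succ l =>
    obtain ⟨w, ⟨hlen, hw⟩, z, hz, rfl⟩ := mem_limitSet.1 hx l
    exact ⟨k :: w, ⟨by simp [hlen], List.forall_mem_cons.2 ⟨⟨hk1, hkn⟩, hw⟩⟩, z, hz, rfl⟩

lemma mem_limitSet_of_apply_mem (hg : ∀ i, 1 ≤ i → i ≤ n → MapsTo (g i) (Icc 0 1) (Icc 0 1))
    (hinj : Function.Injective (g k))
    (hsep : ∀ i, 1 ≤ i → i ≤ n → g k x ∈ g i '' Icc 0 1 → i = k) (hx : g k x ∈ limitSet g n) :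
    x ∈ limitSet g n := by
  refine mem_limitSet.2 fun l => ?_
  obtain ⟨_ | ⟨i, w⟩, ⟨hlen, hw⟩, z, hz, hzx⟩ := mem_limitSet.1 hx (l + 1)
  · simp at hlen
  · obtain ⟨hi, hw⟩ := List.forall_mem_cons.1 hw
    obtain rfl := hsep i hi.1 hi.2 ⟨_, mapsTo_wordComp hg w hw hz, hzx⟩
    exact ⟨w, ⟨by simpa using hlen, hw⟩, z, hz, hinj hzx⟩

end LimitSet

section AffineLimitSet

variable {b : ℕ → ℝ} {n k : ℕ} {h x u : ℝ}

lemma mapsTo_gAff_succ (hb : IsCutSequence b) (k : ℕ) :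
    MapsTo (gAff b (k + 1)) (Icc 0 1) (Icc 0 1) := fun _ hx =>
  Icc_subset_Icc (hb.pos _).le (hb.le_one _) (gAff_succ_mem_Icc hb.strictAnti k hx)

lemma mapsTo_gAff (hb : IsCutSequence b) (i : ℕ) (hi : 1 ≤ i) :
    MapsTo (gAff b i) (Icc 0 1) (Icc 0 1) :=
  Nat.sub_add_cancel hi ▸ mapsTo_gAff_succ hb (i - 1)

lemma limitSet_gAff_subset_Icc (hb : IsCutSequence b) : limitSet (gAff b) n ⊆ Icc (b n) 1 := by
  intro x hx
  obtain ⟨_ | i, hi, hin, z, hz, rfl⟩ :=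
    exists_mem_image_of_mem_limitSet (fun i hi _ => mapsTo_gAff hb i hi) hx
  · simp at hi
  · exact Icc_subset_Icc (hb.strictAnti.antitone hin) (hb.le_one i)
      (gAff_succ_mem_Icc hb.strictAnti i hz)

lemma mem_limitSet_of_gAff_succ_mem (hb : IsCutSequence b) (hx : x ∈ Ioo (0 : ℝ) 1)
    (hmem : gAff b (k + 1) x ∈ limitSet (gAff b) n) : x ∈ limitSet (gAff b) n := by
  have hanti := gAff_succ_strictAnti hb.strictAnti k
  have hlower := hanti hx.2
  have hupper := hanti hx.1
  rw [gAff_succ_one] at hlower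
  rw [gAff_succ_zero] at hupper
  refine mem_limitSet_of_apply_mem (fun i hi _ => mapsTo_gAff hb i hi) hanti.injective ?_ hmem
  rintro (_ | i) hi - ⟨z, hz, hzx⟩
  · simp at hi
  obtain ⟨hiz, hzi⟩ := gAff_succ_mem_Icc hb.strictAnti i hz
  rw [hzx] at hiz hzi
  have hik : k < i + 1 := hb.strictAnti.lt_iff_gt.1 (hiz.trans_lt hupper)
  have hki : i < k + 1 := hb.strictAnti.lt_iff_gt.1 (hlower.trans_le hzi)
  omega

open scoped Pointwise in
lemma hausdorffMeasure_image_gAff_succ (hb : StrictAnti b) (h0 : 0 ≤ h) (k : ℕ) (A : Set ℝ) :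
    μH[h] (gAff b (k + 1) '' A) = ENNReal.ofReal (gap b k ^ h) * μH[h] A := by
  have hgap := gap_pos hb k
  have himage : gAff b (k + 1) '' A = IsometryEquiv.subLeft (b k) '' (gap b k • A) := by
    rw [← image_smul, image_image]
    rfl
  rw [himage, IsometryEquiv.hausdorffMeasure_image, Measure.hausdorffMeasure_smul₀ h0 hgap.ne',
    ENNReal.smul_def, smul_eq_mul, ← ENNReal.ofReal_coe_nnreal]
  simp [abs_of_pos hgap]

lemma Icc_gAff_inter_limitSet_subset (hb : IsCutSequence b) (hu : u ≤ 1) :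
    Icc (gAff b (k + 1) u) (b k) ∩ limitSet (gAff b) n ⊆
      gAff b (k + 1) '' (Icc 0 u ∩ limitSet (gAff b) n) ∪ {b k, b (k + 1)} := by
  have hanti := gAff_succ_strictAnti hb.strictAnti k
  have hsucc : b (k + 1) ≤ gAff b (k + 1) u := by simpa using hanti.antitone hu
  rintro x ⟨⟨hux, hxk⟩, hxJ⟩
  obtain ⟨z, hz, rfl⟩ := exists_gAff_succ_eq hb.strictAnti ⟨hsucc.trans hux, hxk⟩
  rcases hz.1.eq_or_lt with rfl | hz0
  · simp
  rcases hz.2.eq_or_lt with rfl | hz1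
  · simp
  exact .inl ⟨z, ⟨⟨hz.1, hanti.le_iff_ge.1 hux⟩, mem_limitSet_of_gAff_succ_mem hb ⟨hz0, hz1⟩ hxJ⟩,
    rfl⟩

lemma image_gAff_inter_limitSet_subset (hb : IsCutSequence b) (hk : k < n) :
    gAff b (k + 1) '' (Icc 0 u ∩ limitSet (gAff b) n) ⊆
      Icc (gAff b (k + 1) u) (b k) ∩ limitSet (gAff b) n := by
  have hanti := (gAff_succ_strictAnti hb.strictAnti k).antitone
  rintro _ ⟨z, ⟨⟨hz0, hzu⟩, hzJ⟩, rfl⟩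
  exact ⟨⟨hanti hzu, by simpa using hanti hz0⟩,
    mapsTo_limitSet (fun i hi _ => mapsTo_gAff hb i hi) k.succ_pos hk hzJ⟩

lemma hausdorffMeasure_Icc_gAff_inter_limitSet (hb : IsCutSequence b) (h0 : 0 < h) (hk : k < n)
    (hu : u ≤ 1) :
    μH[h] (Icc (gAff b (k + 1) u) (b k) ∩ limitSet (gAff b) n) =
      ENNReal.ofReal (gap b k ^ h) * μH[h] (Icc 0 u ∩ limitSet (gAff b) n) := by
  have := Measure.nullSingletonClass_hausdorff ℝ h0
  have hends : μH[h] ({b k, b (k + 1)} : Set ℝ) = 0 := (toFinite _).measure_zero _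
  rw [← hausdorffMeasure_image_gAff_succ hb.strictAnti h0.le]
  refine le_antisymm ?_ (measure_mono (image_gAff_inter_limitSet_subset hb hk))
  calc _ ≤ _ := measure_mono (Icc_gAff_inter_limitSet_subset hb hu)
    _ ≤ _ := measure_union_le _ _
    _ = _ := by rw [hends, add_zero]

end AffineLimitSet

section DistributionFunction

open ProbabilityTheory

variable {b : ℕ → ℝ} {n : ℕ} {h : ℝ}

lemma measure_Icc_eq_ofReal_cdf_sub (μ : Measure ℝ) [IsProbabilityMeasure μ]
    [NullSingletonClass μ] (s t : ℝ) : μ (Icc s t) = ENNReal.ofReal (cdf μ t - cdf μ s) := by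
  rw [← StieltjesFunction.measure_Ioc, measure_cdf]
  exact measure_congr Ioc_ae_eq_Icc.symm

lemma nullSingletonClass_cond_hausdorff (h0 : 0 < h) (J : Set ℝ) :
    NullSingletonClass (cond μH[h] J) := by
  have := Measure.nullSingletonClass_hausdorff ℝ h0
  exact ⟨fun x => cond_absolutelyContinuous (measure_singleton x)⟩

lemma cond_limitSet_Icc_gAff (hb : IsCutSequence b) (h0 : 0 < h) {k : ℕ} (hk : k < n) {u : ℝ}
    (hu : u ≤ 1) :
    cond μH[h] (limitSet (gAff b) n) (Icc (gAff b (k + 1) u) (b k)) =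
      ENNReal.ofReal (gap b k ^ h) * cond μH[h] (limitSet (gAff b) n) (Icc 0 u) := by
  rw [cond_apply' measurableSet_Icc, cond_apply' measurableSet_Icc, inter_comm,
    hausdorffMeasure_Icc_gAff_inter_limitSet hb h0 hk hu, inter_comm (limitSet _ _)]
  exact mul_left_comm _ _ _

theorem isSelfSimilarCDF_cdf_cond_hausdorff (hb : IsCutSequence b) (h0 : 0 < h)
    (hne : μH[h] (limitSet (gAff b) n) ≠ 0) (hfin : μH[h] (limitSet (gAff b) n) ≠ ⊤) :
    IsSelfSimilarCDF b n h (cdf (cond μH[h] (limitSet (gAff b) n))) := by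
  set m := cond μH[h] (limitSet (gAff b) n) with hm
  have := nullSingletonClass_cond_hausdorff h0 (limitSet (gAff b) n)
  have : IsProbabilityMeasure m := cond_isProbabilityMeasure_of_finite hne hfin
  have hJ : limitSet (gAff b) n ⊆ Icc (b n) 1 := limitSet_gAff_subset_Icc hb
  have hzero : ∀ x ≤ b n, cdf m x = 0 := by
    intro x hx
    have hnull : μH[h] (limitSet (gAff b) n ∩ Iic x) = 0 := by
      have := Measure.nullSingletonClass_hausdorff ℝ h0
      refine measure_mono_null (fun y hy => ?_) (measure_singleton (b n))
      exact le_antisymm (hy.2.trans hx) (hJ hy.1).1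
    rw [cdf_eq_real, measureReal_def, hm, cond_apply' measurableSet_Iic, hnull, mul_zero,
      ENNReal.toReal_zero]
  refine ⟨monotone_cdf m, hzero, ?_, fun k hk u hu => ?_⟩
  · have hfull : limitSet (gAff b) n ∩ Iic 1 = limitSet (gAff b) n :=
      inter_eq_left.2 fun y hy => (hJ hy).2
    rw [cdf_eq_real, measureReal_def, hm, cond_apply' measurableSet_Iic, hfull,
      ENNReal.inv_mul_cancel hne hfin, ENNReal.toReal_one]
  · have hscale := cond_limitSet_Icc_gAff hb h0 hk hu.2
    have hgap : 0 ≤ gap b k ^ h := Real.rpow_nonneg (gap_pos hb.strictAnti k).le h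
    have hle : gAff b (k + 1) u ≤ b k := (gAff_succ_mem_Icc hb.strictAnti k hu).2
    rw [measure_Icc_eq_ofReal_cdf_sub, measure_Icc_eq_ofReal_cdf_sub, ← ENNReal.ofReal_mul hgap,
      ← hm, hzero 0 (hb.pos n).le, sub_zero, ENNReal.ofReal_eq_ofReal_iff
        (sub_nonneg.2 (monotone_cdf m hle)) (mul_nonneg hgap (cdf_nonneg m u))] at hscale
    linarith

lemma normMeas_eq_cond (g : ℕ → ℝ → ℝ) (h : ℕ → ℝ) (n : ℕ) {A : Set ℝ} (hA : MeasurableSet A) :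
    normMeas g h n A = cond μH[h n] (limitSet g n) A := by
  rw [normMeas, cond_apply' hA, inter_comm, ENNReal.div_eq_inv_mul]

theorem normMeas_Icc_div_le_intervalConstant (hb : IsCutSequence b) {h : ℕ → ℝ} {θ s t : ℝ}
    (h0 : 0 < h n) (h1 : h n ≤ 1) (hθ1 : θ < 1) (hgap : ∀ k, gap b k ≤ θ * b k)
    (hcontr : 2 ^ (1 - h n) * θ ^ h n < 1) (hs : 0 ≤ s) (hst : s < t) (ht : t ≤ 1) :
    normMeas (gAff b) h n (Icc s t) / ENNReal.ofReal ((t - s) ^ h n) ≤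
      ENNReal.ofReal (intervalConstant n (h n) θ) := by
  have hlen : 0 < (t - s) ^ h n := Real.rpow_pos_of_pos (sub_pos.2 hst) _
  rw [normMeas_eq_cond _ _ _ measurableSet_Icc]
  -- In the degenerate cases `cond` is the zero measure, just as `0 / 0 = x / ⊤ = 0` in `normMeas`.
  by_cases hne : μH[h n] (limitSet (gAff b) n) = 0
  · simp [cond_eq_zero_of_meas_eq_zero hne]
  by_cases hfin : μH[h n] (limitSet (gAff b) n) = ⊤
  · simp [cond_eq_zero.2 (.inl hfin)]
  have := nullSingletonClass_cond_hausdorff h0 (limitSet (gAff b) n)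
  have := cond_isProbabilityMeasure_of_finite hne hfin
  rw [measure_Icc_eq_ofReal_cdf_sub, ← ENNReal.ofReal_div_of_pos hlen]
  refine ENNReal.ofReal_le_ofReal ((IncrementLE.iff_div_le hst).1 ?_)
  exact (isSelfSimilarCDF_cdf_cond_hausdorff hb h0 hne hfin).incrementLE_intervalConstant
    hb h0.le h1 hθ1 hgap hcontr hs hst ht

end DistributionFunction

section Asymptotics

variable {h : ℕ → ℝ}

lemma tendsto_one_of_one_sub_mul_log (hle : ∀ᶠ n in atTop, h n ≤ 1)
    (hlog : Tendsto (fun n : ℕ => (1 - h n) * Real.log n) atTop (𝓝 0)) :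
    Tendsto h atTop (𝓝 1) := by
  have hsub : Tendsto (fun n => 1 - h n) atTop (𝓝 0) := by
    refine tendsto_of_tendsto_of_tendsto_of_le_of_le' tendsto_const_nhds hlog ?_ ?_
    · filter_upwards [hle] with n hn using sub_nonneg.2 hn
    · have hlog1 := (Real.tendsto_log_atTop.comp tendsto_natCast_atTop_atTop).eventually_ge_atTop 1
      filter_upwards [hle, hlog1] with n hn hlogn
      exact le_mul_of_one_le_right (sub_nonneg.2 hn) hlogn
  simpa using hsub.const_sub 1

lemma tendsto_natCast_rpow_one_sub
    (hlog : Tendsto (fun n : ℕ => (1 - h n) * Real.log n) atTop (𝓝 0)) :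
    Tendsto (fun n : ℕ => (n : ℝ) ^ (1 - h n)) atTop (𝓝 1) := by
  refine (Real.exp_zero ▸ (Real.continuous_exp.tendsto 0).comp hlog).congr' ?_
  filter_upwards [eventually_gt_atTop 0] with n hn
  rw [Real.rpow_def_of_pos (Nat.cast_pos.2 hn), mul_comm, Function.comp_apply]

lemma tendsto_const_rpow_one_sub {c : ℝ} (hc : c ≠ 0) (hh : Tendsto h atTop (𝓝 1)) :
    Tendsto (fun n => c ^ (1 - h n)) atTop (𝓝 1) := by
  simpa using (tendsto_const_nhds (x := c)).rpow (hh.const_sub 1) (.inl hc)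

lemma tendsto_two_rpow_mul_rpow {θ : ℝ} (hθ : θ ≠ 0) (hh : Tendsto h atTop (𝓝 1)) :
    Tendsto (fun n => 2 ^ (1 - h n) * θ ^ h n) atTop (𝓝 θ) := by
  simpa using (tendsto_const_rpow_one_sub two_ne_zero hh).mul
    ((tendsto_const_nhds (x := θ)).rpow hh (.inl hθ))

lemma tendsto_intervalConstant {θ : ℝ} (hθ : θ ≠ 0) (hθ1 : θ ≠ 1) (hh : Tendsto h atTop (𝓝 1))
    (hlog : Tendsto (fun n : ℕ => (1 - h n) * Real.log n) atTop (𝓝 0)) :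
    Tendsto (fun n => intervalConstant n (h n) θ) atTop (𝓝 1) := by
  have htwo := tendsto_const_rpow_one_sub two_ne_zero hh
  have hne : 1 - θ ≠ 0 := sub_ne_zero.2 hθ1.symm
  have hθh : Tendsto (fun n => θ ^ h n) atTop (𝓝 θ) := by
    simpa using (tendsto_const_nhds (x := θ)).rpow hh (.inl hθ)
  have hend : Tendsto (fun n => endConstant n (h n) θ) atTop (𝓝 1) := by
    have hquot := ((tendsto_natCast_rpow_one_sub hlog).mul (htwo.sub hθh)).div
      ((tendsto_two_rpow_mul_rpow hθ hh).const_sub 1) hne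
    rwa [one_mul, div_self hne] at hquot
  simpa [intervalConstant] using (tendsto_const_rpow_one_sub three_ne_zero hh).mul (htwo.mul hend)

end Asymptotics

namespace IsCutSequence

variable {b : ℕ → ℝ}

lemma of_tendsto_zero (hb0 : b 0 = 1) (hb : StrictAnti b) (hlim : Tendsto b atTop (𝓝 0)) :
    IsCutSequence b :=
  ⟨hb0, hb, fun k => (hb.antitone.le_of_tendsto hlim (k + 1)).trans_lt (hb k.lt_succ_self)⟩

lemma exists_gap_le_mul (hb : IsCutSequence b)
    (hM : ∃ M : ℝ, ∀ k, (b k - b (k + 1)) / b (k + 1) ≤ M) :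
    ∃ θ < 1, ∀ k, gap b k ≤ θ * b k := by
  obtain ⟨M, hM⟩ := hM
  have hM0 : 0 < M := (div_pos (gap_pos hb.strictAnti 0) (hb.pos 1)).trans_le (hM 0)
  refine ⟨M / (M + 1), (div_lt_one (by positivity)).2 (lt_add_one M), fun k => ?_⟩
  have hk := (div_le_iff₀ (hb.pos (k + 1))).1 (hM k)
  rw [gap, div_mul_eq_mul_div, le_div_iff₀ (by positivity)]
  linarith

lemma exponent_mem_Ioc_of_sum_rpow_eq_one (hb : IsCutSequence b) {n : ℕ} {h : ℝ} (hn : 2 ≤ n)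
    (hsum : ∑ k ∈ Finset.Icc 1 n, (b (k - 1) - b k) ^ h = 1) : h ∈ Ioc (0 : ℝ) 1 := by
  have hshift : ∑ k ∈ Finset.range n, gap b k ^ h = 1 := by
    rw [← hsum, ← Finset.Ico_add_one_right_eq_Icc, Finset.sum_Ico_eq_sum_range]
    simp [gap, add_comm 1]
  have hgap := gap_pos hb.strictAnti
  constructor
  · by_contra! hneg
    have hcard : ∑ _k ∈ Finset.range n, (1 : ℝ) ≤ ∑ k ∈ Finset.range n, gap b k ^ h :=
      Finset.sum_le_sum fun k _ =>
        Real.one_le_rpow_of_pos_of_le_one_of_nonpos (hgap k) (hb.gap_le_one k) hneg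
    rw [hshift, Finset.sum_const, Finset.card_range, nsmul_one] at hcard
    exact absurd (Nat.cast_le_one.1 hcard) (by omega)
  · by_contra! hlarge
    have hlen : ∑ k ∈ Finset.range n, gap b k ^ h ≤ ∑ k ∈ Finset.range n, gap b k :=
      Finset.sum_le_sum fun k _ => by
        simpa using Real.rpow_le_rpow_of_exponent_ge (hgap k) (hb.gap_le_one k) hlarge.le
    rw [hshift, Finset.range_eq_Ico, sum_gap_Ico b n.zero_le, hb.zero] at hlen
    linarith [hb.pos n]

end IsCutSequence

/-- In the linear setting, under (C1) and (C2),
    `limsup_{n→∞} sup{ m_n([s,t])/(t-s)^{h_n} : 0 ≤ s < t ≤ 1, (s,t) ∩ J_n ≠ ∅ } ≤ 1`. -/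
theorem linear_density_all_intervals
    (b : ℕ → ℝ) (h : ℕ → ℝ)
    (hb0 : b 0 = 1) (hbanti : StrictAnti b)
    (hblim : Filter.Tendsto b Filter.atTop (nhds 0))
    (hmoran : ∀ n, 1 ≤ n → ∑ k ∈ Finset.Icc 1 n, (b (k - 1) - b k) ^ h n = 1)
    (hdimH : ∀ n, 1 ≤ n → dimH (limitSet (gAff b) n) = ENNReal.ofReal (h n))
    (hC1 : Filter.Tendsto (fun n : ℕ => (1 - h n) * Real.log n) Filter.atTop (nhds 0))
    (hC2 : ∃ M : ℝ, ∀ k : ℕ, (b k - b (k + 1)) / b (k + 1) ≤ M) :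
    Filter.limsup
      (fun n : ℕ => ⨆ (s : ℝ) (t : ℝ)
        (_ : 0 ≤ s ∧ s < t ∧ t ≤ 1 ∧ (Set.Ioo s t ∩ limitSet (gAff b) n).Nonempty),
        normMeas (gAff b) h n (Set.Icc s t) / ENNReal.ofReal ((t - s) ^ h n))
      Filter.atTop ≤ 1 := by
  have hb := IsCutSequence.of_tendsto_zero hb0 hbanti hblim
  obtain ⟨θ, hθ1, hgap⟩ := hb.exists_gap_le_mul hC2
  have hθ : θ ≠ 0 := (hb.pos_of_gap_le_mul (hgap 0)).ne'
  have hexp : ∀ n, 2 ≤ n → h n ∈ Ioc (0 : ℝ) 1 := fun n hn =>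
    hb.exponent_mem_Ioc_of_sum_rpow_eq_one hn (hmoran n (by omega))
  have hh : Tendsto h atTop (𝓝 1) := tendsto_one_of_one_sub_mul_log
    ((eventually_ge_atTop 2).mono fun n hn => (hexp n hn).2) hC1
  have hconst := ENNReal.tendsto_ofReal (tendsto_intervalConstant hθ hθ1.ne hh hC1)
  rw [← ENNReal.ofReal_one, ← hconst.limsup_eq]
  refine limsup_le_limsup ?_
  filter_upwards [eventually_ge_atTop 2, (tendsto_two_rpow_mul_rpow hθ hh).eventually_lt_const hθ1]
    with n hn hcontr
  refine iSup₂_le fun s t => iSup_le fun ⟨hs, hst, ht, _⟩ => ?_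
  exact normMeas_Icc_div_le_intervalConstant hb (hexp n hn).1 (hexp n hn).2 hθ1 hgap hcontr
    hs hst ht
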